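/- arXiv:1104.5456 — 3 statements merged into one kernel-verified Lean document; each statement's English description precedes it below -/
import Mathlib

section
/- Let n ∈ ℕ, z ∈ ℝⁿ and u ∈ Iⁿ, and write 𝕋 = {−1, 0, 1}. If ‖z*‖² ≥ min_{v ∈ L·𝕋ⁿ} ‖z* + u + v‖², then ‖z‖² ≥ min_{ṽ ∈ L·𝕋ⁿ} ‖z + u + ṽ‖². (Here L·𝕋ⁿ is the set of vectors in ℝⁿ each of whose coordinates lies in {−L, 0, L}, and ‖·‖ is the Euclidean norm.) -/
open MeasureTheory ProbabilityTheory Real Filter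
open scoped ENNReal

noncomputable section

/-- Reduction of `x` modulo the half-open interval `[a, b)`. -/
def modIco (a b x : ℝ) : ℝ := a + (b - a) * Int.fract ((x - a) / (b - a))

/-- `L = √12`. -/
def Lc : ℝ := Real.sqrt 12

/-- `x*`: reduction of `x` modulo the basic interval `I = [-L/2, L/2)`. -/
def starI (x : ℝ) : ℝ := modIco (-(Lc / 2)) (Lc / 2) x

/-- `δ(p, γ) = min_{l ∈ {1,…,p−1}} |l·γ − ⌊l·γ⌉|`. -/
def deltaP (p : ℕ) (γ : ℝ) : ℝ :=
  sInf {d : ℝ | ∃ l : ℕ, 1 ≤ l ∧ l ≤ p - 1 ∧ d = |(l : ℝ) * γ - round ((l : ℝ) * γ)|}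

/-- The set `P'(γ)` of admissible primes (depends on the SNR). -/
def Pgood (SNR : ℝ) (γ : ℝ) : Set ℕ :=
  {p | p.Prime ∧
    Real.exp (-(3 * SNR / (2 * (p : ℝ) ^ 2)) * (modIco (-(1/4)) (1/4) γ) ^ 2) <
      1 - 2 * (p : ℝ) * Real.exp (-(3 * SNR / 8))}

/-- First rate expression in the achievable-rate theorem. -/
def rateA (SNR : ℝ) (p : ℕ) (γ : ℝ) : ℝ :=
  -(1/2) * Real.logb 2 (1/(p : ℝ)^2 + Real.sqrt (2 * π / (3 * SNR))
    + (1/(p : ℝ)) * Real.exp (-(3 * SNR / (2 * (p : ℝ)^2)) * (deltaP p γ)^2)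
    + 2 * Real.exp (-(3 * SNR / 8)))

/-- Second rate expression in the achievable-rate theorem. -/
def rateB (SNR : ℝ) (p : ℕ) (γ : ℝ) : ℝ :=
  -Real.logb 2 (1/(p : ℝ) + Real.sqrt (2 * π / (3 * (deltaP p γ)^2 * SNR))
    + 2 * Real.exp (-(3 * SNR / 8)))

/-- The `k`-th point of the constellation `Λ_p`. -/
def constPt (p : ℕ) (k : ℕ) : ℝ := starI (Lc / (p : ℝ) * (k : ℝ))

/-- The constellation `Λ_p` as a finite set of reals. -/
def constSet (p : ℕ) : Finset ℝ := (Finset.range p).image (constPt p)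

/-- The uniform probability measure on the constellation `Λ_p`. -/
def uniformConst (p : ℕ) : Measure ℝ :=
  (p : ℝ≥0∞)⁻¹ • ∑ k ∈ Finset.range p, Measure.dirac (constPt p k)

/-- One-coordinate step, when `z` is at least one period to the right of `s`. -/
lemma coord_pos (L s z u v : ℝ) (hL : 0 < L) (hs : -(L / 2) ≤ s) (hz : s + L ≤ z)
    (hu1 : -(L / 2) ≤ u) (hu2 : u ≤ L / 2) (hv : v = -L ∨ v = 0 ∨ v = L) :
    ∃ v' : ℝ, (v' = -L ∨ v' = 0 ∨ v' = L) ∧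
      s ^ 2 - (s + u + v) ^ 2 ≤ z ^ 2 - (z + u + v') ^ 2 := by
  by_cases hw : u + v ≤ 0
  · refine ⟨v, hv, ?_⟩
    nlinarith [mul_nonneg (neg_nonneg.mpr hw) (show 0 ≤ z - s by linarith)]
  push Not at hw
  have hA : s ^ 2 - (s + u + v) ^ 2 ≤ (u + v) * (L - (u + v)) := by
    nlinarith [mul_nonneg hw.le (show 0 ≤ 2 * s + L by linarith)]
  by_cases hu : 0 ≤ u
  · refine ⟨-L, Or.inl rfl, ?_⟩
    have hB : (L - u) * u ≤ z ^ 2 - (z + u + -L) ^ 2 := by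
      nlinarith [mul_nonneg (show 0 ≤ L - u by linarith) (show 0 ≤ 2 * z - L by linarith)]
    rcases hv with rfl | rfl | rfl
    · linarith
    · nlinarith
    · nlinarith
  · push Not at hu
    rcases hv with rfl | rfl | rfl
    · linarith
    · linarith
    · refine ⟨0, Or.inr (Or.inl rfl), ?_⟩
      nlinarith [mul_nonneg (neg_nonneg.mpr hu.le) (show 0 ≤ 2 * z - v by linarith)]

lemma Lc_pos : 0 < Lc := by unfold Lc; positivity

lemma starI_spec (x : ℝ) :
    -(Lc / 2) ≤ starI x ∧ starI x ≤ Lc / 2 ∧ ∃ k : ℤ, x = starI x + k * Lc := by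
  have hL := Lc_pos
  have e : Lc / 2 - -(Lc / 2) = Lc := by ring
  unfold starI modIco
  rw [e]
  have h0 := Int.fract_nonneg ((x - -(Lc / 2)) / Lc)
  have h1 := (Int.fract_lt_one ((x - -(Lc / 2)) / Lc)).le
  refine ⟨by nlinarith, by nlinarith, ⌊(x - -(Lc / 2)) / Lc⌋, ?_⟩
  have h2 := Int.fract_add_floor ((x - -(Lc / 2)) / Lc)
  rw [eq_div_iff hL.ne'] at h2
  linarith

lemma coord (z u v : ℝ) (hu : u ∈ Set.Ico (-(Lc / 2)) (Lc / 2))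
    (hv : v = -Lc ∨ v = 0 ∨ v = Lc) :
    ∃ v' : ℝ, (v' = -Lc ∨ v' = 0 ∨ v' = Lc) ∧
      (starI z) ^ 2 - (starI z + u + v) ^ 2 ≤ z ^ 2 - (z + u + v') ^ 2 := by
  obtain ⟨h1, h2, k, hk⟩ := starI_spec z
  have hL := Lc_pos
  rcases lt_trichotomy k 0 with h | h | h
  · have hk1 : (k : ℝ) ≤ -1 := by exact_mod_cast (show k ≤ -1 by omega)
    obtain ⟨w, hw, hle⟩ := coord_pos Lc (-starI z) (-z) (-u) (-v) hL (by linarith)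
      (by nlinarith) (by linarith [hu.2]) (by linarith [hu.1])
      (by rcases hv with h | h | h <;> simp [h])
    refine ⟨-w, by rcases hw with h | h | h <;> simp [h], ?_⟩
    nlinarith
  · subst h
    have e : z = starI z := by simpa using hk
    refine ⟨v, hv, ?_⟩
    rw [← e]
  · have hk1 : (1 : ℝ) ≤ k := by exact_mod_cast (show 1 ≤ k by omega)
    exact coord_pos Lc (starI z) z u v hL h1 (by nlinarith) hu.1 hu.2.le hv

/-- **Lemma 1.** If the folded noise `z*` is closer (in the modulo sense, over shifts in
`L·𝕋ⁿ`) to `z* + u` than to the origin, the same holds for the unfolded noise `z`. -/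
theorem modulo_lemma (n : ℕ) (z u : Fin n → ℝ)
    (hu : ∀ t, u t ∈ Set.Ico (-(Lc / 2)) (Lc / 2))
    (h : ∃ v : Fin n → ℝ, (∀ t, v t = -Lc ∨ v t = 0 ∨ v t = Lc) ∧
        ∑ t, (starI (z t)) ^ 2 ≥ ∑ t, (starI (z t) + u t + v t) ^ 2) :
    ∃ v' : Fin n → ℝ, (∀ t, v' t = -Lc ∨ v' t = 0 ∨ v' t = Lc) ∧
      ∑ t, (z t) ^ 2 ≥ ∑ t, (z t + u t + v' t) ^ 2 := by
  obtain ⟨v, hv, hle⟩ := h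
  choose v' hv' hd using fun t => coord (z t) (u t) (v t) (hu t) (hv t)
  refine ⟨v', hv', ?_⟩
  have := Finset.sum_le_sum (fun t (_ : t ∈ Finset.univ) => hd t)
  simp only [Finset.sum_sub_distrib] at this
  linarith
end
end

section
/- Let p be a prime and SNR > 0. Let X be a random variable uniformly distributed over the constellation Λ_p, and let Θ be a real random variable statistically independent of X. Define U = (X + Θ)*. Then 𝔼[exp(−(SNR/8)·U²)] ≤ 1/p + √(2π/(3·SNR)). -/
open MeasureTheory ProbabilityTheory Real Filter
open scoped ENNReal

noncomputable section

lemma half_sum (B b : ℝ) (hB : 0 < B) (hb0 : 0 ≤ b) (hb1 : b ≤ 1) (m : ℕ) :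
    ∑ j ∈ Finset.range m, Real.exp (-B * ((j : ℝ) + b) ^ 2) ≤ (1 - b) + Real.sqrt (π / B) / 2 := by
  set g : ℝ → ℝ := fun t => Real.exp (-B * (max t 0) ^ 2) with hg
  have hgc : Continuous g := by fun_prop
  have hanti : Antitone g := by
    intro s t hst
    have h1 : max s 0 ≤ max t 0 := max_le_max_right 0 hst
    have h0 : 0 ≤ max s 0 := le_max_right _ _
    apply Real.exp_le_exp.2
    nlinarith [pow_le_pow_left₀ h0 h1 2]
  have hgauss : Integrable (fun x : ℝ => Real.exp (-B * x ^ 2)) := integrable_exp_neg_mul_sq hB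
  have hpos : ∀ T : ℝ, 0 ≤ T → ∫ t in (0:ℝ)..T, g t ≤ Real.sqrt (π / B) / 2 := by
    intro T hT
    rw [← integral_gaussian_Ioi B, intervalIntegral.integral_of_le hT]
    rw [setIntegral_congr_fun (g := fun x : ℝ => Real.exp (-B * x ^ 2)) measurableSet_Ioc]
    · apply setIntegral_mono_set hgauss.integrableOn
      · exact Eventually.of_forall fun x => (Real.exp_pos _).le
      · exact (Set.Ioc_subset_Ioi_self).eventuallyLE
    · intro x hx
      simp [hg, max_eq_left hx.1.le]
  rcases Nat.eq_zero_or_pos m with rfl | hm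
  · have := Real.sqrt_nonneg (π / B)
    simp only [Finset.range_zero, Finset.sum_empty]
    linarith
  have h1 := (hanti.antitoneOn (Set.Icc (b - 1) (b - 1 + m))).sum_le_integral
  have hm1 : (1:ℝ) ≤ m := by exact_mod_cast hm
  have h2 : ∫ t in (b-1)..(b - 1 + m), g t = (∫ t in (b-1)..0, g t) + ∫ t in (0:ℝ)..(b - 1 + m), g t :=
    (intervalIntegral.integral_add_adjacent_intervals (hgc.intervalIntegrable _ _)
      (hgc.intervalIntegrable _ _)).symm
  have h3 : ∫ t in (b-1)..0, g t = 1 - b := by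
    rw [intervalIntegral.integral_congr (g := fun _ => (1:ℝ))]
    · simp
    · intro x hx
      rw [Set.uIcc_of_le (by linarith)] at hx
      simp [hg, max_eq_right hx.2]
  have h4 := hpos (b - 1 + m) (by linarith)
  calc _ = ∑ i ∈ Finset.range m, g (b - 1 + ((i + 1 : ℕ) : ℝ)) := by
        apply Finset.sum_congr rfl
        intro i _
        have : (b - 1 + ((i + 1 : ℕ) : ℝ)) = i + b := by push_cast; ring
        rw [this]
        simp only [hg]
        rw [max_eq_left (by positivity)]
    _ ≤ _ := h1
    _ ≤ _ := by rw [h2, h3]; linarith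

lemma int_sum (B a : ℝ) (hB : 0 < B) (ha0 : 0 ≤ a) (ha1 : a ≤ 1) (s : Finset ℤ) :
    ∑ n ∈ s, Real.exp (-B * ((n : ℝ) + a) ^ 2) ≤ 1 + Real.sqrt (π / B) := by
  have hA := half_sum B a hB ha0 ha1
  have hC := half_sum B (1 - a) hB (by linarith) (by linarith)
  have sA := summable_of_sum_range_le (fun n => (Real.exp_pos _).le) hA
  have sC := summable_of_sum_range_le (fun n => (Real.exp_pos _).le) hC
  have tA := Real.tsum_le_of_sum_range_le (fun n => (Real.exp_pos _).le) hA
  have tC := Real.tsum_le_of_sum_range_le (fun n => (Real.exp_pos _).le) hC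
  have key := HasSum.of_nat_of_neg_add_one (f := fun n : ℤ => Real.exp (-B * ((n : ℝ) + a) ^ 2))
    (by simpa using sA.hasSum) (m' := ∑' j : ℕ, Real.exp (-B * ((j : ℝ) + (1 - a)) ^ 2)) (by
      convert sC.hasSum using 3 with n
      push_cast; ring)
  refine (sum_le_hasSum s (fun n _ => (Real.exp_pos _).le) key).trans ?_
  simp only [neg_mul] at tA tC ⊢
  linarith

lemma starI_eq (x : ℝ) : ∃ z : ℤ, starI x = x - Lc * z := by
  have := Lc_pos
  refine ⟨⌊(x - -(Lc / 2)) / (Lc / 2 - -(Lc / 2))⌋, ?_⟩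
  unfold starI modIco
  rw [← Int.self_sub_floor]
  have h : Lc / 2 - -(Lc / 2) = Lc := by ring
  rw [h]
  field_simp
  ring

lemma cond_bound (p : ℕ) (hp : 0 < p) (SNR : ℝ) (hSNR : 0 < SNR) (θ : ℝ) :
    ∑ k ∈ Finset.range p, Real.exp (-(SNR / 8) * (starI (constPt p k + θ)) ^ 2)
      ≤ 1 + p * Real.sqrt (2 * π / (3 * SNR)) := by
  have hL := Lc_pos
  have hL2 : Lc ^ 2 = 12 := Real.sq_sqrt (by norm_num)
  have hp' : (0:ℝ) < p := by exact_mod_cast hp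
  have hz : ∀ k : ℕ, ∃ z : ℤ, starI (constPt p k + θ) = Lc / p * k + θ - Lc * z := by
    intro k
    obtain ⟨z1, h1⟩ := starI_eq (Lc / (p : ℝ) * (k : ℝ))
    obtain ⟨z2, h2⟩ := starI_eq (constPt p k + θ)
    refine ⟨z1 + z2, ?_⟩
    rw [h2, constPt, h1]; push_cast; ring
  choose z hz using hz
  set y := θ * p / Lc with hy
  have hθ : θ = Lc / p * (⌊y⌋ + Int.fract y) := by
    rw [Int.floor_add_fract, hy]; field_simp
  set m : ℕ → ℤ := fun k => k + ⌊y⌋ - p * z k with hm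
  have hinj : Set.InjOn m (Finset.range p) := by
    intro i hi j hj hij
    simp only [hm] at hij
    simp at hi hj
    have : ((i:ℤ) : ℤ) % p = (j:ℤ) % p := by
      have h : (i:ℤ) = j + p * (z i - z j) := by linarith
      rw [h, Int.add_mul_emod_self_left]
    rw [Int.emod_eq_of_lt (by positivity) (by exact_mod_cast hi),
      Int.emod_eq_of_lt (by positivity) (by exact_mod_cast hj)] at this
    exact_mod_cast this
  have hB : 0 < 3 * SNR / (2 * (p:ℝ) ^ 2) := by positivity
  have := int_sum _ (Int.fract y) hB (Int.fract_nonneg y) (Int.fract_lt_one y).le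
    ((Finset.range p).image m)
  rw [Finset.sum_image hinj] at this
  have hs : Real.sqrt (π / (3 * SNR / (2 * (p:ℝ) ^ 2))) = p * Real.sqrt (2 * π / (3 * SNR)) := by
    have : π / (3 * SNR / (2 * (p:ℝ) ^ 2)) = p ^ 2 * (2 * π / (3 * SNR)) := by
      field_simp
    rw [this, Real.sqrt_mul (by positivity), Real.sqrt_sq hp'.le]
  rw [hs] at this
  refine le_trans (le_of_eq ?_) this
  apply Finset.sum_congr rfl
  intro k _
  congr 1
  have e : starI (constPt p k + θ) = Lc / p * (m k + Int.fract y) := by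
    rw [hz k]
    nth_rewrite 1 [hθ]
    simp only [hm]; push_cast; field_simp; ring
  rw [e, mul_pow, div_pow, hL2]
  field_simp
  ring

lemma measurable_starI : Measurable starI := by
  unfold starI modIco
  fun_prop

/-- **Lemma 3.** For `X` uniform on `Λ_p` and `Θ` independent of `X`,
with `U = (X + Θ)*`, one has `𝔼[exp(−(SNR/8)·U²)] ≤ 1/p + √(2π/(3·SNR))`. -/
theorem lemma_expectation
    (p : ℕ) (hp : p.Prime) (SNR : ℝ) (hSNR : 0 < SNR)
    (Ω : Type) (_ : MeasurableSpace Ω) (μ : Measure Ω) [IsProbabilityMeasure μ]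
    (X Θ : Ω → ℝ) (hX : Measurable X) (hΘ : Measurable Θ)
    (hXunif : Measure.map X μ = uniformConst p)
    (hindep : IndepFun X Θ μ) :
    ∫ ω, Real.exp (-(SNR / 8) * (starI (X ω + Θ ω)) ^ 2) ∂μ
      ≤ 1 / (p : ℝ) + Real.sqrt (2 * π / (3 * SNR)) := by
  have hp0 : (0:ℝ) < p := by exact_mod_cast hp.pos
  set g : ℝ × ℝ → ℝ := fun q => Real.exp (-(SNR / 8) * (starI (q.1 + q.2)) ^ 2) with hg
  have hgm : Measurable g := by
    have := measurable_starI
    fun_prop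
  have hg1 : ∀ q, ‖g q‖ ≤ 1 := by
    intro q
    rw [Real.norm_of_nonneg (Real.exp_pos _).le]
    apply Real.exp_le_one_iff.2
    have : 0 ≤ SNR / 8 * (starI (q.1 + q.2)) ^ 2 := by positivity
    linarith
  have hmap := (indepFun_iff_map_prod_eq_prod_map_map hX.aemeasurable hΘ.aemeasurable).1 hindep
  have : IsProbabilityMeasure (μ.map X) := Measure.isProbabilityMeasure_map hX.aemeasurable
  have : IsProbabilityMeasure (μ.map Θ) := Measure.isProbabilityMeasure_map hΘ.aemeasurable
  have hgi : Integrable g ((μ.map X).prod (μ.map Θ)) :=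
    Integrable.of_bound hgm.aestronglyMeasurable 1 (Eventually.of_forall hg1)
  have e1 : ∫ ω, Real.exp (-(SNR / 8) * (starI (X ω + Θ ω)) ^ 2) ∂μ
      = ∫ θ, ∫ x, g (x, θ) ∂(μ.map X) ∂(μ.map Θ) := by
    rw [← integral_prod_symm g hgi, ← hmap,
      integral_map (hX.prodMk hΘ).aemeasurable hgm.aestronglyMeasurable]
  have e2 : ∀ θ, ∫ x, g (x, θ) ∂(μ.map X) ≤ 1 / (p : ℝ) + Real.sqrt (2 * π / (3 * SNR)) := by
    intro θ
    rw [hXunif, uniformConst, integral_smul_measure, integral_finsetSum_measure]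
    · simp only [integral_dirac, hg]
      have := cond_bound p hp.pos SNR hSNR θ
      simp only [ENNReal.toReal_inv, ENNReal.toReal_natCast, smul_eq_mul]
      calc _ ≤ (p:ℝ)⁻¹ * (1 + p * Real.sqrt (2 * π / (3 * SNR))) := by gcongr
        _ = _ := by field_simp
    · intro k _
      exact Integrable.of_bound (hgm.comp measurable_prodMk_right).aestronglyMeasurable 1
        (Eventually.of_forall fun x => hg1 (x, θ))
  rw [e1]
  calc _ ≤ ∫ _θ, (1 / (p : ℝ) + Real.sqrt (2 * π / (3 * SNR))) ∂(μ.map Θ) :=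
        integral_mono hgi.integral_prod_right (integrable_const _) e2
    _ = _ := by simp
end
end

section
/- Let 𝒟 ⊂ ℝ be a finite set with at least two elements, let ρ > 0, and let d_min = min{ |x₁ − x₂| : x₁, x₂ ∈ 𝒟, x₁ ≠ x₂ } be its minimum distance. Then there exists θ ∈ ℝ such that ∑_{x ∈ 𝒟} exp(−ρ·x²) < ∑_{k ∈ ℤ} exp(−ρ·(k·d_min + θ)²). -/
open Real

noncomputable section

lemma aux_summable (ρ d θ : ℝ) (hρ : 0 < ρ) (hd : 0 < d) :
    Summable (fun k : ℤ => Real.exp (-ρ * ((k : ℝ) * d + θ) ^ 2)) := by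
  have hc : 0 < ρ * d ^ 2 / 2 := by positivity
  set c := ρ * d ^ 2 / 2 with hcdef
  have h1 : Summable (fun k : ℤ => Real.exp (-c * (k : ℝ) ^ 2)) := by
    have h := summable_pow_mul_jacobiTheta₂_term_bound 0 (T := c / π) (by positivity) 0
    refine h.congr fun k => ?_
    have hpi := Real.pi_ne_zero
    simp only [pow_zero, Int.cast_one, one_mul, mul_zero, zero_mul, sub_zero]
    congr 1
    field_simp
  refine Summable.of_nonneg_of_le (fun k => (Real.exp_pos _).le) (fun k => ?_)
    (h1.mul_left (Real.exp (ρ * θ ^ 2)))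
  rw [← Real.exp_add]
  apply Real.exp_le_exp.mpr
  rw [hcdef]
  nlinarith [mul_nonneg hρ.le (sq_nonneg ((k : ℝ) * d + 2 * θ))]

lemma aux_theta (D : Finset ℝ) (d : ℝ) (hd : 0 < d)
    (hsep : ∀ x ∈ D, ∀ y ∈ D, x < y → d ≤ y - x) :
    ∃ θ : ℝ, 0 ≤ θ ∧ θ ≤ d ∧ (∀ x ∈ D, 0 ≤ x → θ ≤ x) ∧ (∀ x ∈ D, x < 0 → x - θ ≤ -d) := by
  by_cases h : ∃ y ∈ D, 0 ≤ y ∧ y ≤ d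
  · have hne : (D.filter (fun y => 0 ≤ y)).Nonempty := by
      obtain ⟨y, hy, h0, _⟩ := h
      exact ⟨y, by simp [hy, h0]⟩
    obtain ⟨y, hy, hmin⟩ := Finset.exists_min_image _ id hne
    simp only [Finset.mem_filter, id] at hy hmin
    obtain ⟨w, hw, hw0, hwd⟩ := h
    refine ⟨y, hy.2, (hmin w ⟨hw, hw0⟩).trans hwd, fun x hx h0 => hmin x ⟨hx, h0⟩, fun x hx h0 => ?_⟩
    have := hsep x hx y hy.1 (by linarith)
    linarith
  · push Not at h
    exact ⟨d, hd.le, le_rfl, fun x hx h0 => (h x hx h0).le, fun x _ h0 => by linarith⟩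

lemma aux_main (D : Finset ℝ) (ρ : ℝ) (hρ : 0 < ρ) (d : ℝ) (hd : 0 < d)
    (hsep : ∀ x ∈ D, ∀ y ∈ D, x < y → d ≤ y - x) :
    ∃ θ : ℝ, ∑ x ∈ D, Real.exp (-ρ * x ^ 2)
      < ∑' k : ℤ, Real.exp (-ρ * ((k : ℝ) * d + θ) ^ 2) := by
  obtain ⟨θ, h0, hθd, hpos, hneg⟩ := aux_theta D d hd hsep
  refine ⟨θ, ?_⟩
  have key : ∀ x : ℝ, ∃ k : ℤ, x ∈ D →
      ((0 ≤ x → 0 ≤ k ∧ (k : ℝ) * d + θ ≤ x ∧ x < (k : ℝ) * d + θ + d) ∧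
       (x < 0 → k ≤ -1 ∧ x ≤ (k : ℝ) * d + θ ∧ (k : ℝ) * d + θ - d < x)) := by
    intro x
    by_cases hx0 : 0 ≤ x
    · refine ⟨⌊(x - θ) / d⌋, fun hx => ⟨fun _ => ⟨?_, ?_, ?_⟩, fun h => by linarith⟩⟩
      · exact Int.floor_nonneg.mpr (div_nonneg (by linarith [hpos x hx hx0]) hd.le)
      · have := (le_div_iff₀ hd).mp (Int.floor_le ((x - θ) / d))
        linarith
      · have := (div_lt_iff₀ hd).mp (Int.lt_floor_add_one ((x - θ) / d))
        linarith
    · push Not at hx0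
      refine ⟨⌈(x - θ) / d⌉, fun hx => ⟨fun h => by linarith, fun _ => ⟨?_, ?_, ?_⟩⟩⟩
      · rw [Int.ceil_le, div_le_iff₀ hd]
        push_cast
        linarith [hneg x hx hx0]
      · have := (div_le_iff₀ hd).mp (Int.le_ceil ((x - θ) / d))
        linarith
      · have := (lt_div_iff₀ hd).mp (sub_lt_iff_lt_add.mpr (Int.ceil_lt_add_one ((x - θ) / d)))
        linarith
  choose f hf using key
  have hlt : ∀ x ∈ D, ∀ y ∈ D, x < y → f x ≠ f y := by
    intro x hx y hy hxy he
    have hs := hsep x hx y hy hxy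
    have hX := hf x hx
    have hY := hf y hy
    rw [he] at hX
    rcases le_or_gt 0 x with h | h <;> rcases le_or_gt 0 y with h' | h'
    · have a := hX.1 h
      have b := hY.1 h'
      linarith
    · linarith
    · have a := hX.2 h
      have b := hY.1 h'
      omega
    · have a := hX.2 h
      have b := hY.2 h'
      linarith
  have hinj : Set.InjOn f D := by
    intro x hx y hy he
    rcases lt_trichotomy x y with h | h | h
    · exact absurd he (hlt x hx y hy h)
    · exact h
    · exact absurd he.symm (hlt y hy x hx h)
  have hle : ∀ x ∈ D, Real.exp (-ρ * x ^ 2) ≤ Real.exp (-ρ * ((f x : ℝ) * d + θ) ^ 2) := by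
    intro x hx
    apply Real.exp_le_exp.mpr
    suffices h : ((f x : ℝ) * d + θ) ^ 2 ≤ x ^ 2 by nlinarith
    rcases le_or_gt 0 x with h | h
    · obtain ⟨a, b, -⟩ := (hf x hx).1 h
      have a' : (0 : ℝ) ≤ f x := by exact_mod_cast a
      have : 0 ≤ (f x : ℝ) * d + θ := by positivity
      exact pow_le_pow_left₀ this b 2
    · obtain ⟨a, b, c⟩ := (hf x hx).2 h
      have hneg' : (f x : ℝ) * d + θ ≤ 0 := by
        have a' : (f x : ℝ) ≤ -1 := by exact_mod_cast a
        nlinarith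
      nlinarith
  have hsum := aux_summable ρ d θ hρ hd
  obtain ⟨k, hk⟩ := Infinite.exists_notMem_finset (D.image f)
  calc ∑ x ∈ D, Real.exp (-ρ * x ^ 2)
      ≤ ∑ x ∈ D, Real.exp (-ρ * ((f x : ℝ) * d + θ) ^ 2) := Finset.sum_le_sum hle
    _ = ∑ k ∈ D.image f, Real.exp (-ρ * ((k : ℝ) * d + θ) ^ 2) :=
        by rw [Finset.sum_image hinj]
    _ < ∑ k ∈ insert k (D.image f), Real.exp (-ρ * ((k : ℝ) * d + θ) ^ 2) := by
        rw [Finset.sum_insert hk]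
        linarith [Real.exp_pos (-ρ * ((k : ℝ) * d + θ) ^ 2)]
    _ ≤ _ := hsum.sum_le_tsum _ (fun i _ => (Real.exp_pos _).le)

/-- **Lemma 10.** For a finite set `𝒟 ⊂ ℝ` with at least two points and minimum
distance `d_min`, there is a `θ ∈ ℝ` with
`∑_{x ∈ 𝒟} exp(−ρx²) < ∑_{k ∈ ℤ} exp(−ρ(k·d_min + θ)²)`. -/
theorem finite_constellation_sum_lt_lattice_sum
    (D : Finset ℝ) (hD : 2 ≤ D.card) (ρ : ℝ) (hρ : 0 < ρ) :
    ∃ θ : ℝ, ∑ x ∈ D, Real.exp (-ρ * x ^ 2)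
      < ∑' k : ℤ, Real.exp (-ρ * ((k : ℝ) *
          (sInf {d : ℝ | ∃ x₁ ∈ D, ∃ x₂ ∈ D, x₁ ≠ x₂ ∧ d = |x₁ - x₂|}) + θ) ^ 2) := by
  set S := {d : ℝ | ∃ x₁ ∈ D, ∃ x₂ ∈ D, x₁ ≠ x₂ ∧ d = |x₁ - x₂|} with hS
  have hfin : S.Finite := by
    refine ((D ×ˢ D).image (fun p => |p.1 - p.2|)).finite_toSet.subset ?_
    rintro d ⟨x, hx, y, hy, -, rfl⟩
    simp only [Finset.coe_image, Set.mem_image, Finset.mem_coe, Finset.mem_product]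
    exact ⟨(x, y), ⟨hx, hy⟩, rfl⟩
  have hne : S.Nonempty := by
    obtain ⟨x, hx, y, hy, hxy⟩ := Finset.one_lt_card.mp hD
    exact ⟨_, x, hx, y, hy, hxy, rfl⟩
  apply aux_main D ρ hρ
  · obtain ⟨x, hx, y, hy, hxy, he⟩ := hne.csInf_mem hfin
    rw [he]
    exact abs_pos.mpr (sub_ne_zero.mpr hxy)
  · intro x hx y hy hxy
    refine csInf_le hfin.bddBelow ⟨y, hy, x, hx, hxy.ne', ?_⟩
    rw [abs_of_pos (by linarith)]
end
end
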